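/- arXiv:2309.15322 — 2 statements merged into one kernel-verified Lean document; each statement's English description precedes it below -/
import Mathlib

section
/- Let the cluster sizes satisfy s₁ ≥ s₂ ≥ … ≥ s_k ≥ 1 with s₁ + … + s_k = n, and define δ_i := λ_i(G) − (p−q)·s_i for i ∈ [k]. Then: (1) δ_i ≥ 0 for every i ∈ [k] and Σ_{i=1}^{k} δ_i = n·q; (2) λ₁(G) ≥ n·q + (p−q)·n/k, and hence Σ_{i=2}^{k} δ_i ≤ (p−q)·(s₁ − n/k). -/
open MeasureTheory ProbabilityTheory Matrix Finset

namespace SBM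

/-- Euclidean norm of a vector. -/
noncomputable def enorm {m : Type*} [Fintype m] (x : m → ℝ) : ℝ :=
  Real.sqrt (∑ i, x i ^ 2)

/-- Spectral (ℓ²-operator) norm of a matrix. -/
noncomputable def specNorm {n : ℕ} (A : Matrix (Fin n) (Fin n) ℝ) : ℝ :=
  ‖Matrix.toEuclideanCLM (𝕜 := ℝ) A‖

/-- The `2 → ∞` norm: maximal Euclidean norm of a row. -/
noncomputable def n2i {n : ℕ} (A : Matrix (Fin n) (Fin n) ℝ) : ℝ :=
  ⨆ i : Fin n, enorm (A i)

/-- The mean matrix `G` of the SSBM with cluster assignment `cl`. -/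
def meanMatrix (n k : ℕ) (p q : ℝ) (cl : Fin n → Fin k) : Matrix (Fin n) (Fin n) ℝ :=
  Matrix.of fun u v => if cl u = cl v then p else q

/-- The size of cluster `i`. -/
def clusterSize {n k : ℕ} (cl : Fin n → Fin k) (i : Fin k) : ℕ :=
  (Finset.univ.filter fun v => cl v = i).card

/-- The partition is balanced: every cluster size is within a `1 ± 1/(16 log n)` factor
of `n / k`. -/
noncomputable def Balanced (n k : ℕ) (cl : Fin n → Fin k) : Prop :=
  ∀ i : Fin k,
    (1 - 1 / (16 * Real.log n)) * ((n : ℝ) / k) ≤ (clusterSize cl i : ℝ) ∧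
    (clusterSize cl i : ℝ) ≤ (1 + 1 / (16 * Real.log n)) * ((n : ℝ) / k)

/-- `lam, v` is a spectral decomposition of `A`: eigenvalues in non-increasing order with
an orthonormal eigenbasis. -/
def IsSpectralDecomp {n : ℕ} (A : Matrix (Fin n) (Fin n) ℝ)
    (lam : Fin n → ℝ) (v : Fin n → Fin n → ℝ) : Prop :=
  Antitone lam ∧
  (∀ i j, dotProduct (v i) (v j) = if i = j then (1 : ℝ) else 0) ∧
  A = ∑ i, lam i • Matrix.vecMulVec (v i) (v i)

/-- Orthogonal projection onto the span of the top `k` eigenvectors `v 0, …, v (k-1)`. -/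
noncomputable def projTop {n : ℕ} (k : ℕ) (v : Fin n → Fin n → ℝ) :
    Matrix (Fin n) (Fin n) ℝ :=
  ∑ i ∈ Finset.univ.filter (fun i : Fin n => (i : ℕ) < k), Matrix.vecMulVec (v i) (v i)

/-- The column of `A` indexed by `u`. -/
def column {n : ℕ} (A : Matrix (Fin n) (Fin n) ℝ) (u : Fin n) : Fin n → ℝ :=
  fun i => A i u

/-- `ψ(M) = A·M² + B·M` where `A = -1/(λ₁μ)`, `B = 1/λ₁ + 1/μ`. -/
noncomputable def psiM {n : ℕ} (lam1 mu : ℝ) (M : Matrix (Fin n) (Fin n) ℝ) :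
    Matrix (Fin n) (Fin n) ℝ :=
  (-(1 / (lam1 * mu))) • (M * M) + (1 / lam1 + 1 / mu) • M

/-- `φ(M) = ψ(M)^r`. -/
noncomputable def phiM {n : ℕ} (lam1 mu : ℝ) (r : ℕ) (M : Matrix (Fin n) (Fin n) ℝ) :
    Matrix (Fin n) (Fin n) ℝ :=
  psiM lam1 mu M ^ r

/-- `ψ(t) = A·t² + B·t` where `A = -1/(λ₁μ)`, `B = 1/λ₁ + 1/μ`. -/
noncomputable def psiR (lam1 mu t : ℝ) : ℝ :=
  (-(1 / (lam1 * mu))) * t ^ 2 + (1 / lam1 + 1 / mu) * t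

/-- `φ(t) = ψ(t)^r`. -/
noncomputable def phiR (lam1 mu : ℝ) (r : ℕ) (t : ℝ) : ℝ := psiR lam1 mu t ^ r

end SBM

/-!
Writing `Z` for the cluster membership matrix and `J` for the all-ones matrix,
`G = q J + (p - q) Z Zᵀ`, so that `xᵀ G x = q (∑ x)² + (p - q) ‖Zᵀ x‖²`. All the claims follow
from this quadratic form by Courant–Fischer arguments:
* on the span of the indicators of the `i` largest clusters it is at least `(p - q) sᵢ ‖x‖²`,
  whence `λᵢ ≥ (p - q) sᵢ`;
* it is nonnegative everywhere and vanishes on the kernel of `Zᵀ`, which has codimension at most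
  `k`, so only the first `k` eigenvalues can be nonzero and they sum to `tr G = n p`;
* at the all-ones vector it is `q n² + (p - q) ∑ sᵢ² ≥ q n² + (p - q) n² / k`, whence the bound
  on `λ₁`.
-/

namespace SBM

section LinearAlgebra

variable {ι m R K : Type*} [Fintype m] [CommRing R] [Field K]

lemma dotProduct_sum_smul_vecMulVec_mulVec [Fintype ι] (lam : ι → R) (v : ι → m → R) (x : m → R) :
    x ⬝ᵥ (∑ i, lam i • vecMulVec (v i) (v i)) *ᵥ x = ∑ i, lam i * (v i ⬝ᵥ x) ^ 2 := by
  simp only [sum_mulVec, dotProduct_sum, smul_mulVec, vecMulVec_mulVec, dotProduct_smul,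
    op_smul_eq_smul, smul_eq_mul]
  refine sum_congr rfl fun i _ => ?_
  rw [dotProduct_comm x (v i), sq]

lemma sum_sq_dotProduct_of_orthonormal [DecidableEq m] {v : m → m → R}
    (hv : ∀ i j, v i ⬝ᵥ v j = if i = j then 1 else 0) (x : m → R) :
    ∑ i, (v i ⬝ᵥ x) ^ 2 = x ⬝ᵥ x := by
  have mul_transpose : of v * (of v)ᵀ = 1 := by
    ext i j
    exact (hv i j).trans (one_apply (i := i) (j := j)).symm
  have transpose_mul : (of v)ᵀ * of v = 1 := mul_eq_one_comm.mp mul_transpose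
  calc ∑ i, (v i ⬝ᵥ x) ^ 2 = (of v *ᵥ x) ⬝ᵥ (of v *ᵥ x) := sum_congr rfl fun _ _ => sq _
    _ = x ⬝ᵥ x := by rw [dotProduct_mulVec, vecMul_mulVec, transpose_mul, vecMul_one]

lemma exists_mem_ne_zero_forall_dotProduct_eq_zero {W : Submodule K (m → K)} {s : Finset ι}
    (v : ι → m → K) (hs : #s < Module.finrank K W) :
    ∃ x ∈ W, x ≠ 0 ∧ ∀ i ∈ s, v i ⬝ᵥ x = 0 := by
  let T : W →ₗ[K] (s → K) := (of fun i : s => v i).mulVecLin.domRestrict W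
  have hT : T.ker ≠ ⊥ := T.ker_ne_bot_of_finrank_lt (by simpa using hs)
  obtain ⟨x, hx, hx0⟩ := Submodule.exists_mem_ne_zero_of_ne_bot hT
  exact ⟨x, x.2, by simpa using hx0, fun i hi => congrFun (LinearMap.mem_ker.mp hx) ⟨i, hi⟩⟩

lemma card_le_add_finrank_ker_vecMulLinear [Fintype ι] (M : Matrix m ι K) :
    Fintype.card m ≤ Fintype.card ι + Module.finrank K M.vecMulLinear.ker := by
  have rank_nullity := M.vecMulLinear.finrank_range_add_finrank_ker
  have range_le := Submodule.finrank_le M.vecMulLinear.range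
  simp only [Module.finrank_fintype_fun_eq_card] at rank_nullity range_le
  omega

end LinearAlgebra

namespace IsSpectralDecomp

variable {n : ℕ} {A : Matrix (Fin n) (Fin n) ℝ} {lam : Fin n → ℝ} {v : Fin n → Fin n → ℝ}
  {W : Submodule ℝ (Fin n → ℝ)} {i : Fin n} {x : Fin n → ℝ} {c : ℝ}

lemma trace_eq_sum (h : IsSpectralDecomp A lam v) : A.trace = ∑ i, lam i := by
  rw [h.2.2, trace_sum]
  exact sum_congr rfl fun i _ => by simp [trace_smul, trace_vecMulVec, h.2.1]

lemma dotProduct_mulVec_self (h : IsSpectralDecomp A lam v) (x : Fin n → ℝ) :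
    x ⬝ᵥ A *ᵥ x = ∑ i, lam i * (v i ⬝ᵥ x) ^ 2 := by
  conv_lhs => rw [h.2.2]
  exact dotProduct_sum_smul_vecMulVec_mulVec lam v x

lemma dotProduct_mulVec_le_of_forall_lt (h : IsSpectralDecomp A lam v)
    (hx : ∀ r < i, v r ⬝ᵥ x = 0) : x ⬝ᵥ A *ᵥ x ≤ lam i * (x ⬝ᵥ x) := by
  rw [h.dotProduct_mulVec_self, ← sum_sq_dotProduct_of_orthonormal h.2.1, mul_sum]
  refine sum_le_sum fun r _ => ?_
  rcases lt_or_ge r i with hr | hr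
  · simp [hx r hr]
  · exact mul_le_mul_of_nonneg_right (h.1 hr) (sq_nonneg _)

lemma le_dotProduct_mulVec_of_forall_gt (h : IsSpectralDecomp A lam v)
    (hx : ∀ r > i, v r ⬝ᵥ x = 0) : lam i * (x ⬝ᵥ x) ≤ x ⬝ᵥ A *ᵥ x := by
  rw [h.dotProduct_mulVec_self, ← sum_sq_dotProduct_of_orthonormal h.2.1, mul_sum]
  refine sum_le_sum fun r _ => ?_
  rcases le_or_gt r i with hr | hr
  · exact mul_le_mul_of_nonneg_right (h.1 hr) (sq_nonneg _)
  · simp [hx r hr]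

lemma le_eigenvalue_of_forall_mem (h : IsSpectralDecomp A lam v)
    (hi : (i : ℕ) < Module.finrank ℝ W) (hW : ∀ x ∈ W, c * (x ⬝ᵥ x) ≤ x ⬝ᵥ A *ᵥ x) :
    c ≤ lam i := by
  obtain ⟨x, hxW, hx0, hx⟩ :=
    exists_mem_ne_zero_forall_dotProduct_eq_zero (s := Iio i) v (by simpa using hi)
  have hle := (hW x hxW).trans
    (h.dotProduct_mulVec_le_of_forall_lt fun r hr => hx r (mem_Iio.mpr hr))
  exact le_of_mul_le_mul_right hle (by simpa using dotProduct_star_self_pos_iff.mpr hx0)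

lemma eigenvalue_le_of_forall_mem (h : IsSpectralDecomp A lam v)
    (hi : n ≤ i + Module.finrank ℝ W) (hW : ∀ x ∈ W, x ⬝ᵥ A *ᵥ x ≤ c * (x ⬝ᵥ x)) :
    lam i ≤ c := by
  obtain ⟨x, hxW, hx0, hx⟩ :=
    exists_mem_ne_zero_forall_dotProduct_eq_zero (s := Ioi i) (W := W) v (by
      rw [Fin.card_Ioi]
      omega)
  have hle := (h.le_dotProduct_mulVec_of_forall_gt fun r hr => hx r (mem_Ioi.mpr hr)).trans
    (hW x hxW)
  exact le_of_mul_le_mul_right hle (by simpa using dotProduct_star_self_pos_iff.mpr hx0)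

end IsSpectralDecomp

section Membership

variable {α β : Type*} [DecidableEq β]

/-- The membership matrix `Z` of the partition of `α` into the fibres of `f`: its column `c` is the
indicator of the fibre over `c`. -/
def membershipMatrix (f : α → β) : Matrix α β ℝ :=
  of fun u c => if f u = c then 1 else 0

lemma membershipMatrix_mulVec [Fintype β] (f : α → β) (a : β → ℝ) :
    membershipMatrix f *ᵥ a = a ∘ f := by
  ext u
  simp [membershipMatrix, mulVec, dotProduct]

lemma membershipMatrix_mul_transpose_apply [Fintype β] (f : α → β) (u w : α) :
    (membershipMatrix f * (membershipMatrix f)ᵀ) u w = if f u = f w then 1 else 0 := by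
  simp [membershipMatrix, mul_apply, eq_comm]

lemma vecMul_membershipMatrix_dotProduct_one [Fintype α] [Fintype β] (f : α → β) (x : α → ℝ) :
    (x ᵥ* membershipMatrix f) ⬝ᵥ 1 = x ⬝ᵥ 1 := by
  rw [← dotProduct_mulVec, membershipMatrix_mulVec, Pi.one_comp]

/-- The space of vectors that are constant on every fibre of `f` and vanish on the fibres outside
`S`, encoded as the image of `ℝ^S` under extension by zero followed by the membership matrix. -/
noncomputable def fiberwiseConstant [Fintype β] (f : α → β) (S : Finset β) :
    Submodule ℝ (α → ℝ) :=
  ((membershipMatrix f).mulVecLin ∘ₗ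
    Function.ExtendByZero.linearMap ℝ (Subtype.val : S → β)).range

lemma exists_mulVec_eq_of_mem_fiberwiseConstant [Fintype β] {f : α → β} {S : Finset β}
    {x : α → ℝ} (hx : x ∈ fiberwiseConstant f S) :
    ∃ b : β → ℝ, (∀ c ∉ S, b c = 0) ∧ membershipMatrix f *ᵥ b = x := by
  obtain ⟨a, rfl⟩ := hx
  refine ⟨Function.extend Subtype.val a 0, fun c hc => ?_, rfl⟩
  exact Function.extend_apply' _ _ _ (by simpa using hc)

lemma finrank_fiberwiseConstant [Fintype β] {f : α → β} {S : Finset β}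
    (hS : ∀ c ∈ S, ∃ u, f u = c) : Module.finrank ℝ (fiberwiseConstant f S) = #S := by
  have hinj : Function.Injective ((membershipMatrix f).mulVecLin ∘ₗ
      Function.ExtendByZero.linearMap ℝ (Subtype.val : S → β)) := by
    intro a b hab
    ext c
    obtain ⟨u, hu⟩ := hS c c.2
    have hab_u := congrFun hab u
    simpa [membershipMatrix_mulVec, hu, Subtype.val_injective.extend_apply] using hab_u
  rw [fiberwiseConstant, LinearMap.finrank_range_of_inj hinj, Module.finrank_fintype_fun_eq_card,
    Fintype.card_coe]

end Membership

section MeanMatrix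

variable {n k : ℕ} {p q : ℝ} {cl : Fin n → Fin k}

lemma sum_clusterSize (cl : Fin n → Fin k) : ∑ c, clusterSize cl c = n := by
  simpa [clusterSize] using (card_eq_sum_card_fiberwise (f := cl) (s := univ) (t := univ)
    (by simp)).symm

lemma transpose_membershipMatrix_mul_self (cl : Fin n → Fin k) :
    (membershipMatrix cl)ᵀ * membershipMatrix cl =
      diagonal fun c => (clusterSize cl c : ℝ) := by
  ext c d
  rcases eq_or_ne c d with rfl | hcd
  · simp [mul_apply, membershipMatrix, clusterSize, ← ite_and]
  · rw [diagonal_apply_ne _ hcd, mul_apply]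
    refine sum_eq_zero fun u _ => ?_
    by_cases hu : cl u = c <;> simp [membershipMatrix, hu, hcd]

lemma membershipMatrix_mulVec_vecMul (cl : Fin n → Fin k) (b : Fin k → ℝ) :
    (membershipMatrix cl *ᵥ b) ᵥ* membershipMatrix cl = fun c => clusterSize cl c * b c := by
  ext c
  rw [← mulVec_transpose, mulVec_mulVec, transpose_membershipMatrix_mul_self, mulVec_diagonal]

lemma membershipMatrix_mulVec_dotProduct_self (cl : Fin n → Fin k) (b : Fin k → ℝ) :
    (membershipMatrix cl *ᵥ b) ⬝ᵥ (membershipMatrix cl *ᵥ b) =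
      ∑ c, clusterSize cl c * b c ^ 2 := by
  rw [dotProduct_mulVec, membershipMatrix_mulVec_vecMul]
  exact sum_congr rfl fun c _ => by ring

lemma trace_meanMatrix (p q : ℝ) (cl : Fin n → Fin k) :
    (meanMatrix n k p q cl).trace = n * p := by
  simp [trace, meanMatrix]

lemma meanMatrix_eq (p q : ℝ) (cl : Fin n → Fin k) :
    meanMatrix n k p q cl =
      q • vecMulVec 1 1 + (p - q) • (membershipMatrix cl * (membershipMatrix cl)ᵀ) := by
  ext u w
  by_cases huw : cl u = cl w <;>
    simp [meanMatrix, membershipMatrix_mul_transpose_apply, huw]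

lemma dotProduct_meanMatrix_mulVec (p q : ℝ) (cl : Fin n → Fin k) (x : Fin n → ℝ) :
    x ⬝ᵥ meanMatrix n k p q cl *ᵥ x =
      q * (x ⬝ᵥ 1) ^ 2 +
        (p - q) * ((x ᵥ* membershipMatrix cl) ⬝ᵥ (x ᵥ* membershipMatrix cl)) := by
  have ones : x ⬝ᵥ vecMulVec 1 1 *ᵥ x = (x ⬝ᵥ 1) ^ 2 := by
    rw [vecMulVec_mulVec, op_smul_eq_smul, dotProduct_smul, dotProduct_comm 1 x, smul_eq_mul, sq]
  have gram : x ⬝ᵥ (membershipMatrix cl * (membershipMatrix cl)ᵀ) *ᵥ x =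
      (x ᵥ* membershipMatrix cl) ⬝ᵥ (x ᵥ* membershipMatrix cl) := by
    rw [← mulVec_mulVec, dotProduct_mulVec, mulVec_transpose]
  rw [meanMatrix_eq, add_mulVec, dotProduct_add, smul_mulVec, smul_mulVec, dotProduct_smul,
    dotProduct_smul, ones, gram, smul_eq_mul, smul_eq_mul]

lemma sub_mul_dotProduct_self_le_of_mem_fiberwiseConstant (hq : 0 ≤ q) (hpq : q ≤ p)
    {S : Finset (Fin k)} {m : ℕ} (hS : ∀ c ∈ S, m ≤ clusterSize cl c) {x : Fin n → ℝ}
    (hx : x ∈ fiberwiseConstant cl S) :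
    (p - q) * m * (x ⬝ᵥ x) ≤ x ⬝ᵥ meanMatrix n k p q cl *ᵥ x := by
  obtain ⟨b, hb, rfl⟩ := exists_mulVec_eq_of_mem_fiberwiseConstant hx
  set x := membershipMatrix cl *ᵥ b
  have norm_le : m * (x ⬝ᵥ x) ≤ (x ᵥ* membershipMatrix cl) ⬝ᵥ (x ᵥ* membershipMatrix cl) := by
    rw [membershipMatrix_mulVec_dotProduct_self, membershipMatrix_mulVec_vecMul, mul_sum]
    refine sum_le_sum fun c _ => ?_
    by_cases hc : c ∈ S
    · have hm : (m : ℝ) ≤ clusterSize cl c := by exact_mod_cast hS c hc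
      calc (m : ℝ) * (clusterSize cl c * b c ^ 2)
          ≤ clusterSize cl c * (clusterSize cl c * b c ^ 2) := by gcongr
        _ = clusterSize cl c * b c * (clusterSize cl c * b c) := by ring
    · simp [hb c hc]
  calc (p - q) * m * (x ⬝ᵥ x) = (p - q) * (m * (x ⬝ᵥ x)) := mul_assoc _ _ _
    _ ≤ (p - q) * ((x ᵥ* membershipMatrix cl) ⬝ᵥ (x ᵥ* membershipMatrix cl)) :=
        mul_le_mul_of_nonneg_left norm_le (sub_nonneg.mpr hpq)
    _ ≤ x ⬝ᵥ meanMatrix n k p q cl *ᵥ x := by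
        rw [dotProduct_meanMatrix_mulVec]
        exact le_add_of_nonneg_left (by positivity)

variable {lam : Fin n → ℝ} {v : Fin n → Fin n → ℝ}

lemma eigenvalue_meanMatrix_nonneg (hq : 0 ≤ q) (hpq : q ≤ p)
    (h : IsSpectralDecomp (meanMatrix n k p q cl) lam v) (j : Fin n) : 0 ≤ lam j := by
  refine h.le_eigenvalue_of_forall_mem (W := ⊤) (by simp) fun x _ => ?_
  have norm_nonneg : 0 ≤ (x ᵥ* membershipMatrix cl) ⬝ᵥ (x ᵥ* membershipMatrix cl) := by
    simpa using dotProduct_star_self_nonneg (x ᵥ* membershipMatrix cl)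
  rw [dotProduct_meanMatrix_mulVec, zero_mul]
  positivity

lemma eigenvalue_meanMatrix_nonpos (h : IsSpectralDecomp (meanMatrix n k p q cl) lam v)
    {j : Fin n} (hj : k ≤ j) : lam j ≤ 0 := by
  refine h.eigenvalue_le_of_forall_mem (W := (membershipMatrix cl).vecMulLinear.ker) ?_
    fun x hx => ?_
  · have hcodim := card_le_add_finrank_ker_vecMulLinear (membershipMatrix cl)
    simp only [Fintype.card_fin] at hcodim
    omega
  · have hxZ : x ᵥ* membershipMatrix cl = 0 := hx
    have hx1 : x ⬝ᵥ 1 = 0 := by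
      rw [← vecMul_membershipMatrix_dotProduct_one cl, hxZ, zero_dotProduct]
    simp [dotProduct_meanMatrix_mulVec, hxZ, hx1]

lemma sum_eigenvalue_meanMatrix (hkn : k ≤ n) (hq : 0 ≤ q) (hpq : q ≤ p)
    (h : IsSpectralDecomp (meanMatrix n k p q cl) lam v) :
    ∑ i : Fin k, lam (Fin.castLE hkn i) = n * p := by
  rw [← trace_meanMatrix p q cl, h.trace_eq_sum]
  refine Fintype.sum_of_injective _ (Fin.castLE_injective hkn) _ _ (fun j hj => ?_) fun _ => rfl
  have hkj : k ≤ j := by simpa using hj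
  exact (eigenvalue_meanMatrix_nonpos h hkj).antisymm (eigenvalue_meanMatrix_nonneg hq hpq h j)

lemma sub_mul_le_eigenvalue_meanMatrix (hq : 0 ≤ q) (hpq : q ≤ p) {S : Finset (Fin k)} {m : ℕ}
    (hS : ∀ c ∈ S, m ≤ clusterSize cl c)
    (h : IsSpectralDecomp (meanMatrix n k p q cl) lam v) {j : Fin n} (hj : j < #S) :
    (p - q) * m ≤ lam j := by
  rcases m.eq_zero_or_pos with rfl | hm
  · simpa using eigenvalue_meanMatrix_nonneg hq hpq h j
  have nonempty_cluster : ∀ c ∈ S, ∃ u, cl u = c := fun c hc => by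
    simpa [Finset.Nonempty] using card_pos.mp (hm.trans_le (hS c hc))
  refine h.le_eigenvalue_of_forall_mem (W := fiberwiseConstant cl S) ?_ fun x hx =>
    sub_mul_dotProduct_self_le_of_mem_fiberwiseConstant hq hpq hS hx
  rwa [finrank_fiberwiseConstant nonempty_cluster]

lemma sq_div_le_sum_sq_clusterSize (cl : Fin n → Fin k) :
    (n : ℝ) ^ 2 / k ≤ ∑ c, (clusterSize cl c : ℝ) ^ 2 := by
  have cauchy_schwarz := sq_sum_le_card_mul_sum_sq (s := univ)
    (f := fun c => (clusterSize cl c : ℝ))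
  rw [← Nat.cast_sum, sum_clusterSize, card_univ, Fintype.card_fin] at cauchy_schwarz
  exact div_le_of_le_mul₀ k.cast_nonneg (by positivity) (by rwa [mul_comm])

lemma dotProduct_meanMatrix_mulVec_one (p q : ℝ) (cl : Fin n → Fin k) :
    1 ⬝ᵥ meanMatrix n k p q cl *ᵥ 1 =
      q * n ^ 2 + (p - q) * ∑ c, (clusterSize cl c : ℝ) ^ 2 := by
  have ones : membershipMatrix cl *ᵥ 1 = 1 := membershipMatrix_mulVec cl 1
  have sizes : 1 ᵥ* membershipMatrix cl = fun c => (clusterSize cl c : ℝ) := by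
    simpa [ones] using membershipMatrix_mulVec_vecMul cl 1
  rw [dotProduct_meanMatrix_mulVec, sizes]
  simp [dotProduct, sq]

lemma add_div_le_eigenvalue_meanMatrix (hpq : q ≤ p)
    (h : IsSpectralDecomp (meanMatrix n k p q cl) lam v) {j : Fin n} (hj : ∀ i, j ≤ i) :
    n * q + (p - q) * ((n : ℝ) / k) ≤ lam j := by
  have rayleigh := h.dotProduct_mulVec_le_of_forall_lt (i := j) (x := 1)
    fun r hr => absurd hr (hj r).not_gt
  rw [dotProduct_meanMatrix_mulVec_one, one_dotProduct_one, Fintype.card_fin] at rayleigh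
  have hn : (0 : ℝ) < n := by exact_mod_cast j.pos
  refine le_of_mul_le_mul_right ?_ hn
  calc (n * q + (p - q) * ((n : ℝ) / k)) * n = q * n ^ 2 + (p - q) * ((n : ℝ) ^ 2 / k) := by ring
    _ ≤ q * n ^ 2 + (p - q) * ∑ c, (clusterSize cl c : ℝ) ^ 2 := by
        gcongr
        exact sq_div_le_sum_sq_clusterSize cl
    _ ≤ lam j * n := rayleigh

end MeanMatrix

end SBM

open SBM in
theorem eigenvalues_of_mean_matrix_general {n k : ℕ} (hk : 0 < k) (hkn : k ≤ n) {p q : ℝ}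
    (hq : 0 ≤ q) (hpq : q ≤ p) {cl : Fin n → Fin k} (hsorted : Antitone (clusterSize cl))
    {lam : Fin n → ℝ} {v : Fin n → Fin n → ℝ}
    (hdec : IsSpectralDecomp (meanMatrix n k p q cl) lam v) :
    (∀ i : Fin k, 0 ≤ lam (Fin.castLE hkn i) - (p - q) * (clusterSize cl i : ℝ)) ∧
    (∑ i : Fin k, (lam (Fin.castLE hkn i) - (p - q) * (clusterSize cl i : ℝ)) = (n : ℝ) * q) ∧
    ((n : ℝ) * q + (p - q) * ((n : ℝ) / k) ≤ lam (Fin.castLE hkn ⟨0, hk⟩)) ∧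
    (∑ i ∈ Finset.univ.filter (fun i : Fin k => i ≠ ⟨0, hk⟩),
        (lam (Fin.castLE hkn i) - (p - q) * (clusterSize cl i : ℝ)) ≤
      (p - q) * ((clusterSize cl ⟨0, hk⟩ : ℝ) - (n : ℝ) / k)) := by
  set δ : Fin k → ℝ := fun i => lam (Fin.castLE hkn i) - (p - q) * clusterSize cl i
  have nonneg : ∀ i, 0 ≤ δ i := fun i => sub_nonneg.mpr <|
    sub_mul_le_eigenvalue_meanMatrix (S := Iic i) hq hpq (fun c hc => hsorted (mem_Iic.mp hc)) hdec
      (by simp)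
  have sum_eq : ∑ i, δ i = n * q := by
    rw [sum_sub_distrib, sum_eigenvalue_meanMatrix hkn hq hpq hdec, ← mul_sum, ← Nat.cast_sum,
      sum_clusterSize]
    ring
  have top_le : (n : ℝ) * q + (p - q) * ((n : ℝ) / k) ≤ lam (Fin.castLE hkn ⟨0, hk⟩) :=
    add_div_le_eigenvalue_meanMatrix hpq hdec fun i => Nat.zero_le i
  refine ⟨nonneg, sum_eq, top_le, ?_⟩
  rw [filter_ne', sum_erase_eq_sub (mem_univ _), sum_eq]
  linarith

open SBM in
/-- Sort the cluster sizes `s₁ ≥ … ≥ s_k ≥ 1` and set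
`δᵢ = λᵢ(G) − (p−q)·sᵢ`.  Then `δᵢ ≥ 0`, `Σ δᵢ = n·q`, `λ₁(G) ≥ n·q + (p−q)·n/k`, and
`Σ_{i≥2} δᵢ ≤ (p−q)·(s₁ − n/k)`. -/
theorem eigenvalues_of_mean_matrix (n k : ℕ) (hn : 0 < n) (hk : 0 < k) (hkn : k ≤ n)
    (p q : ℝ) (hq : 0 ≤ q) (hpq : q < p) (hp : p ≤ 1)
    (cl : Fin n → Fin k)
    (hsum : ∑ i : Fin k, clusterSize cl i = n)
    (hpos : ∀ i : Fin k, 1 ≤ clusterSize cl i)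
    (hsorted : ∀ i j : Fin k, i ≤ j → clusterSize cl j ≤ clusterSize cl i)
    (lam : Fin n → ℝ) (v : Fin n → Fin n → ℝ)
    (hdec : IsSpectralDecomp (meanMatrix n k p q cl) lam v) :
    (∀ i : Fin k, 0 ≤ lam (Fin.castLE hkn i) - (p - q) * (clusterSize cl i : ℝ)) ∧
    (∑ i : Fin k, (lam (Fin.castLE hkn i) - (p - q) * (clusterSize cl i : ℝ)) = (n : ℝ) * q) ∧
    ((n : ℝ) * q + (p - q) * ((n : ℝ) / k) ≤ lam ⟨0, hn⟩) ∧
    (∑ i ∈ Finset.univ.filter (fun i : Fin k => i ≠ ⟨0, hk⟩),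
        (lam (Fin.castLE hkn i) - (p - q) * (clusterSize cl i : ℝ)) ≤
      (p - q) * ((clusterSize cl ⟨0, hk⟩ : ℝ) - (n : ℝ) / k)) := by
  exact eigenvalues_of_mean_matrix_general hk hkn hq hpq.le hsorted hdec
end

section
/- Suppose n ≥ 3, the partition is balanced, E ∈ ℝ^{V×V} is any symmetric matrix with ‖E‖₂ ≤ 0.01·(p−q)·n/k, and Ĝ := G + E. Then for every vertex u ∈ V, ‖(P_{Ĝ_k} − I)·G_u‖ ≤ 0.04·(p−q)·√(n/k). -/
open MeasureTheory ProbabilityTheory Matrix Finset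

/-!
Write `P` for the projection onto the top `k` eigenvectors of `Ĝ = G + E`. Since `G` is positive
semidefinite of rank at most `k`, all eigenvalues of `Ĝ` beyond the `k`-th lie in `[-‖E‖, ‖E‖]`,
so `‖(P - 1) * Ĝ‖ ≤ ‖E‖` and hence `‖(P - 1) * G‖ ≤ 2 * ‖E‖`. The column `G_u` is the average of
the columns of its cluster, all of which are equal; that is, `G_u = G *ᵥ w` with `w` constant on the
cluster of `u` and `‖w‖ = 1 / √s`, where `s` is the size of that cluster.
-/

namespace SBM

section Spectral

open scoped Matrix.Norms.L2Operator

variable {m : Type*} [Fintype m]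

lemma enorm_eq_norm_toLp (x : m → ℝ) : SBM.enorm x = ‖WithLp.toLp 2 x‖ := by
  simp [SBM.enorm, EuclideanSpace.norm_eq]

lemma enorm_sq (x : m → ℝ) : SBM.enorm x ^ 2 = x ⬝ᵥ x := by
  rw [SBM.enorm, Real.sq_sqrt (by positivity)]
  simp only [dotProduct, sq]

lemma abs_dotProduct_le_enorm_mul_enorm (x y : m → ℝ) :
    |x ⬝ᵥ y| ≤ SBM.enorm x * SBM.enorm y := by
  simpa [enorm_eq_norm_toLp, EuclideanSpace.inner_eq_star_dotProduct, dotProduct_comm y x] using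
    abs_real_inner_le_norm (WithLp.toLp 2 x) (WithLp.toLp 2 y)

variable [DecidableEq m]

lemma enorm_mulVec_le (A : Matrix m m ℝ) (x : m → ℝ) :
    SBM.enorm (A *ᵥ x) ≤ ‖A‖ * SBM.enorm x := by
  rw [enorm_eq_norm_toLp, enorm_eq_norm_toLp]
  exact l2_opNorm_mulVec A (WithLp.toLp 2 x)

lemma abs_dotProduct_mulVec_le (A : Matrix m m ℝ) (x : m → ℝ) :
    |x ⬝ᵥ (A *ᵥ x)| ≤ ‖A‖ * (x ⬝ᵥ x) :=
  calc |x ⬝ᵥ (A *ᵥ x)|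
      ≤ SBM.enorm x * SBM.enorm (A *ᵥ x) := abs_dotProduct_le_enorm_mul_enorm _ _
    _ ≤ SBM.enorm x * (‖A‖ * SBM.enorm x) :=
        mul_le_mul_of_nonneg_left (enorm_mulVec_le A x) (Real.sqrt_nonneg _)
    _ = ‖A‖ * (x ⬝ᵥ x) := by rw [← enorm_sq]; ring

lemma dotProduct_transpose_mul_diagonal_mul_mulVec (U : Matrix m m ℝ) (c x : m → ℝ) :
    x ⬝ᵥ ((Uᵀ * diagonal c * U) *ᵥ x) = ∑ i, c i * (U *ᵥ x) i ^ 2 := by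
  rw [← mulVec_mulVec, ← mulVec_mulVec, dotProduct_mulVec, vecMul_transpose]
  simp only [dotProduct, mulVec_diagonal]
  exact Finset.sum_congr rfl fun i _ => by ring

lemma sum_smul_vecMulVec_eq_transpose_mul_diagonal_mul (v : m → m → ℝ) (c : m → ℝ) :
    ∑ i, c i • vecMulVec (v i) (v i) = (of v)ᵀ * diagonal c * of v := by
  ext a b
  rw [mul_apply]
  simp only [Matrix.sum_apply, Matrix.smul_apply, vecMulVec_apply, mul_diagonal,
    transpose_apply, of_apply, smul_eq_mul]
  exact Finset.sum_congr rfl fun i _ => by ring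

section Orthogonal

variable {U : Matrix m m ℝ}

lemma dotProduct_self_eq_sum_mulVec_sq (hU : U ∈ orthogonalGroup m ℝ) (x : m → ℝ) :
    x ⬝ᵥ x = ∑ i, (U *ᵥ x) i ^ 2 := by
  have h := dotProduct_transpose_mul_diagonal_mul_mulVec U 1 x
  simpa [(mem_orthogonalGroup_iff' _ _).mp hU] using h

lemma transpose_mul_diagonal_mul_mul (hU : U ∈ orthogonalGroup m ℝ) (c d : m → ℝ) :
    (Uᵀ * diagonal c * U) * (Uᵀ * diagonal d * U) = Uᵀ * diagonal (c * d) * U := by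
  calc (Uᵀ * diagonal c * U) * (Uᵀ * diagonal d * U)
      = Uᵀ * diagonal c * (U * Uᵀ) * diagonal d * U := by simp only [Matrix.mul_assoc]
    _ = Uᵀ * diagonal (c * d) * U := by
        rw [(mem_orthogonalGroup_iff _ _).mp hU, Matrix.mul_one, Matrix.mul_assoc Uᵀ,
          diagonal_mul_diagonal, Pi.mul_def]

lemma norm_transpose_mul_diagonal_mul (hU : U ∈ orthogonalGroup m ℝ) (c : m → ℝ) :
    ‖Uᵀ * diagonal c * U‖ = ‖c‖ := by
  have hUt : Uᵀ ∈ unitary (Matrix m m ℝ) := Unitary.star_mem hU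
  rw [CStarRing.norm_mul_mem_unitary _ hU, CStarRing.norm_mem_unitary_mul _ hUt,
    l2_opNorm_diagonal]

lemma neg_norm_le_eigenvalue_of_posSemidef {B E : Matrix m m ℝ} {c : m → ℝ}
    (hU : U ∈ orthogonalGroup m ℝ) (hB : B.PosSemidef) (h : B + E = Uᵀ * diagonal c * U) (i : m) :
    -‖E‖ ≤ c i := by
  have hrow : U *ᵥ U i = Pi.single i 1 := by
    have h1 := congrArg (fun M : Matrix m m ℝ => M.col i) ((mem_orthogonalGroup_iff _ _).mp hU)
    ext j
    simpa [mul_apply, mulVec, dotProduct, Pi.single_apply, one_apply] using congrFun h1 j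
  have hnorm : U i ⬝ᵥ U i = 1 := by
    simp [dotProduct_self_eq_sum_mulVec_sq hU, hrow, Pi.single_apply]
  have hform : U i ⬝ᵥ (B *ᵥ U i) + U i ⬝ᵥ (E *ᵥ U i) = c i := by
    rw [← dotProduct_add, ← add_mulVec, h, dotProduct_transpose_mul_diagonal_mul_mulVec, hrow]
    simp [Pi.single_apply]
  have hE := (abs_le.mp (abs_dotProduct_mulVec_le E (U i))).1
  have hB0 : 0 ≤ U i ⬝ᵥ (B *ᵥ U i) := hB.dotProduct_mulVec_nonneg (U i)
  rw [hnorm] at hE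
  linarith

end Orthogonal

variable {n : ℕ}

lemma exists_mulVec_eq_zero_of_rank_le (B U : Matrix (Fin n) (Fin n) ℝ) {i : Fin n}
    (hi : B.rank ≤ i) : ∃ x ≠ 0, B *ᵥ x = 0 ∧ ∀ j > i, (U *ᵥ x) j = 0 := by
  let L : (Fin n → ℝ) →ₗ[ℝ] LinearMap.range B.mulVecLin × (Finset.Ioi i → ℝ) :=
    B.mulVecLin.rangeRestrict.prod ((LinearMap.funLeft ℝ ℝ Subtype.val) ∘ₗ U.mulVecLin)
  have hdim : Module.finrank ℝ (LinearMap.range B.mulVecLin × (Finset.Ioi i → ℝ)) <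
      Module.finrank ℝ (Fin n → ℝ) := by
    rw [Module.finrank_prod, Module.finrank_fintype_fun_eq_card, Module.finrank_fintype_fun_eq_card,
      Fintype.card_coe, Fin.card_Ioi, Fintype.card_fin]
    change B.rank + _ < n
    omega
  obtain ⟨x, hx, hx0⟩ := Submodule.exists_mem_ne_zero_of_ne_bot
    (LinearMap.ker_ne_bot_of_finrank_lt (f := L) hdim)
  obtain ⟨hB, hU⟩ := Prod.ext_iff.mp (LinearMap.mem_ker.mp hx)
  exact ⟨x, hx0, congrArg Subtype.val hB, fun j hj => congrFun hU ⟨j, Finset.mem_Ioi.mpr hj⟩⟩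

/- A case of Weyl's inequality: test the quadratic form of `B + E` on a nonzero vector of `ker B` in
the span of the top `i + 1` eigenvectors. -/
lemma eigenvalue_le_norm_of_rank_le {B E U : Matrix (Fin n) (Fin n) ℝ} {c : Fin n → ℝ}
    (hU : U ∈ orthogonalGroup (Fin n) ℝ) (hc : Antitone c) (h : B + E = Uᵀ * diagonal c * U)
    {i : Fin n} (hi : B.rank ≤ i) : c i ≤ ‖E‖ := by
  obtain ⟨x, hx0, hBx, hUx⟩ := exists_mulVec_eq_zero_of_rank_le B U hi
  refine le_of_mul_le_mul_right ?_ (dotProduct_self_star_pos_iff.mpr hx0)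
  calc c i * (x ⬝ᵥ x) = ∑ j, c i * (U *ᵥ x) j ^ 2 := by
        rw [dotProduct_self_eq_sum_mulVec_sq hU, Finset.mul_sum]
    _ ≤ ∑ j, c j * (U *ᵥ x) j ^ 2 := by
        refine Finset.sum_le_sum fun j _ => ?_
        rcases le_or_gt j i with hj | hj
        · exact mul_le_mul_of_nonneg_right (hc hj) (sq_nonneg _)
        · simp [hUx j hj]
    _ = x ⬝ᵥ (E *ᵥ x) := by
        rw [← dotProduct_transpose_mul_diagonal_mul_mulVec, ← h, add_mulVec, hBx, zero_add]
    _ ≤ ‖E‖ * (x ⬝ᵥ x) := (abs_le.mp (abs_dotProduct_mulVec_le E x)).2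

section Decomp

variable {A : Matrix (Fin n) (Fin n) ℝ} {lam : Fin n → ℝ} {v : Fin n → Fin n → ℝ}

lemma IsSpectralDecomp.mem_orthogonalGroup (h : IsSpectralDecomp A lam v) :
    of v ∈ orthogonalGroup (Fin n) ℝ := by
  rw [mem_orthogonalGroup_iff]
  ext i j
  exact (h.2.1 i j).trans one_apply.symm

lemma IsSpectralDecomp.eq_transpose_mul_diagonal_mul (h : IsSpectralDecomp A lam v) :
    A = (of v)ᵀ * diagonal lam * of v :=
  h.2.2.trans (sum_smul_vecMulVec_eq_transpose_mul_diagonal_mul v lam)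

lemma projTop_sub_one_eq (hv : of v ∈ orthogonalGroup (Fin n) ℝ) (k : ℕ) :
    projTop k v - 1 =
      (of v)ᵀ * diagonal (fun i : Fin n => if (i : ℕ) < k then (0 : ℝ) else -1) * of v := by
  have hone : (1 : Matrix (Fin n) (Fin n) ℝ) = ∑ i, vecMulVec (v i) (v i) := by
    simpa [(mem_orthogonalGroup_iff' _ _).mp hv] using
      (sum_smul_vecMulVec_eq_transpose_mul_diagonal_mul v 1).symm
  rw [← sum_smul_vecMulVec_eq_transpose_mul_diagonal_mul, hone, projTop, Finset.sum_filter,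
    ← Finset.sum_sub_distrib]
  exact Finset.sum_congr rfl fun i _ => by split_ifs <;> simp

lemma norm_projTop_sub_one_le_one (hv : of v ∈ orthogonalGroup (Fin n) ℝ) (k : ℕ) :
    ‖projTop k v - 1‖ ≤ 1 := by
  rw [projTop_sub_one_eq hv, norm_transpose_mul_diagonal_mul hv,
    pi_norm_le_iff_of_nonneg zero_le_one]
  intro i
  split_ifs <;> simp

lemma IsSpectralDecomp.norm_projTop_sub_one_mul_le (h : IsSpectralDecomp A lam v) {k : ℕ} {ε : ℝ}
    (hε : 0 ≤ ε) (hlam : ∀ i : Fin n, k ≤ i → |lam i| ≤ ε) : ‖(projTop k v - 1) * A‖ ≤ ε := by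
  have hv := h.mem_orthogonalGroup
  rw [projTop_sub_one_eq hv, h.eq_transpose_mul_diagonal_mul, transpose_mul_diagonal_mul_mul hv,
    norm_transpose_mul_diagonal_mul hv, pi_norm_le_iff_of_nonneg hε]
  intro i
  rcases lt_or_ge (i : ℕ) k with hi | hi
  · simpa [hi] using hε
  · simpa [hi.not_gt] using hlam i hi

theorem norm_projTop_sub_one_mul_le_two_mul {B E : Matrix (Fin n) (Fin n) ℝ} {k : ℕ}
    (hB : B.PosSemidef) (hrank : B.rank ≤ k) (hdec : IsSpectralDecomp (B + E) lam v) :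
    ‖(projTop k v - 1) * B‖ ≤ 2 * ‖E‖ := by
  have hv := hdec.mem_orthogonalGroup
  have hA := hdec.eq_transpose_mul_diagonal_mul
  have htail : ‖(projTop k v - 1) * (B + E)‖ ≤ ‖E‖ :=
    hdec.norm_projTop_sub_one_mul_le (norm_nonneg E) fun i hi =>
      abs_le.mpr ⟨neg_norm_le_eigenvalue_of_posSemidef hv hB hA i,
        eigenvalue_le_norm_of_rank_le hv hdec.1 hA (hrank.trans hi)⟩
  have hnoise : ‖(projTop k v - 1) * E‖ ≤ 1 * ‖E‖ :=
    (norm_mul_le _ _).trans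
      (mul_le_mul_of_nonneg_right (norm_projTop_sub_one_le_one hv k) (norm_nonneg E))
  calc ‖(projTop k v - 1) * B‖
      = ‖(projTop k v - 1) * (B + E) - (projTop k v - 1) * E‖ := by
        rw [Matrix.mul_add, add_sub_cancel_right]
    _ ≤ ‖(projTop k v - 1) * (B + E)‖ + ‖(projTop k v - 1) * E‖ := norm_sub_le _ _
    _ ≤ 2 * ‖E‖ := by linarith

theorem enorm_projTop_sub_one_mulVec_mulVec_le {B E : Matrix (Fin n) (Fin n) ℝ} {k : ℕ}
    (hB : B.PosSemidef) (hrank : B.rank ≤ k) (hdec : IsSpectralDecomp (B + E) lam v)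
    (w : Fin n → ℝ) :
    SBM.enorm ((projTop k v - 1) *ᵥ (B *ᵥ w)) ≤ 2 * specNorm E * SBM.enorm w := by
  rw [mulVec_mulVec, specNorm, l2_opNorm_toEuclideanCLM]
  exact (enorm_mulVec_le _ w).trans
    (mul_le_mul_of_nonneg_right (norm_projTop_sub_one_mul_le_two_mul hB hrank hdec)
      (Real.sqrt_nonneg _))

end Decomp

end Spectral

section MeanMatrix

variable {n k : ℕ}

lemma meanMatrix_eq_submatrix (p q : ℝ) (cl : Fin n → Fin k) :
    meanMatrix n k p q cl = (meanMatrix k k p q id).submatrix cl cl := rfl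

lemma rank_meanMatrix_le (p q : ℝ) (cl : Fin n → Fin k) : (meanMatrix n k p q cl).rank ≤ k := by
  rw [meanMatrix_eq_submatrix]
  exact (rank_submatrix_le _ _ _).trans (rank_le_width _)

lemma posSemidef_meanMatrix {p q : ℝ} (hq : 0 ≤ q) (hqp : q ≤ p) (cl : Fin n → Fin k) :
    (meanMatrix n k p q cl).PosSemidef := by
  have hid : meanMatrix k k p q id =
      (p - q) • (1 : Matrix (Fin k) (Fin k) ℝ) + q • vecMulVec 1 (star 1) := by
    ext a b
    by_cases h : a = b <;> simp [meanMatrix, one_apply, h]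
  rw [meanMatrix_eq_submatrix, hid]
  exact ((PosSemidef.one.smul (sub_nonneg.mpr hqp)).add
    ((posSemidef_vecMulVec_self_star 1).smul hq)).submatrix cl

/-- The uniform probability vector on cluster `a`, pairing with which averages over the cluster; it
is `0` if the cluster is empty. -/
noncomputable def clusterAverage (cl : Fin n → Fin k) (a : Fin k) : Fin n → ℝ :=
  fun x => if cl x = a then (clusterSize cl a : ℝ)⁻¹ else 0

lemma clusterSize_pos (cl : Fin n → Fin k) (u : Fin n) : 0 < clusterSize cl (cl u) :=
  Finset.card_pos.mpr ⟨u, by simp⟩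

lemma sum_mul_clusterAverage {cl : Fin n → Fin k} {a : Fin k} (ha : 0 < clusterSize cl a)
    {f : Fin n → ℝ} {c : ℝ} (hf : ∀ x, cl x = a → f x = c) :
    ∑ x, f x * clusterAverage cl a x = c := by
  have hs : (clusterSize cl a : ℝ) ≠ 0 := Nat.cast_ne_zero.mpr ha.ne'
  calc ∑ x, f x * clusterAverage cl a x
      = ∑ x with cl x = a, f x * (clusterSize cl a : ℝ)⁻¹ := by
        simp only [clusterAverage, mul_ite, mul_zero, Finset.sum_filter]
    _ = ∑ x with cl x = a, c * (clusterSize cl a : ℝ)⁻¹ :=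
        Finset.sum_congr rfl fun x hx => by rw [hf x (Finset.mem_filter.mp hx).2]
    _ = clusterSize cl a * (c * (clusterSize cl a : ℝ)⁻¹) := by
        rw [Finset.sum_const, nsmul_eq_mul, clusterSize]
    _ = c := by field_simp

lemma enorm_clusterAverage {cl : Fin n → Fin k} {a : Fin k} (ha : 0 < clusterSize cl a) :
    SBM.enorm (clusterAverage cl a) = (√(clusterSize cl a : ℝ))⁻¹ := by
  have hsum : ∑ x, clusterAverage cl a x * clusterAverage cl a x = (clusterSize cl a : ℝ)⁻¹ :=
    sum_mul_clusterAverage ha fun x hx => if_pos hx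
  simp only [SBM.enorm, sq, hsum, Real.sqrt_inv]

lemma column_meanMatrix_eq_mulVec_clusterAverage (p q : ℝ) (cl : Fin n → Fin k) (u : Fin n) :
    column (meanMatrix n k p q cl) u = meanMatrix n k p q cl *ᵥ clusterAverage cl (cl u) := by
  ext x
  refine (sum_mul_clusterAverage (clusterSize_pos cl u) fun y hy => ?_).symm
  simp only [column, meanMatrix, of_apply, hy]

lemma Balanced.le_four_mul_clusterSize {cl : Fin n → Fin k} (hbal : Balanced n k cl) (hn : 3 ≤ n)
    (a : Fin k) : (n : ℝ) / k ≤ 4 * clusterSize cl a := by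
  have hn' : (3 : ℝ) ≤ n := by exact_mod_cast hn
  have hlog : 1 ≤ Real.log n := by
    rw [Real.le_log_iff_exp_le (by linarith)]
    linarith [Real.exp_one_lt_three]
  have hinv : 1 / (16 * Real.log n) ≤ 1 / 16 :=
    one_div_le_one_div_of_le (by norm_num) (by linarith)
  have hfactor : 1 / 4 ≤ 1 - 1 / (16 * Real.log n) := by linarith
  have hquarter : 1 / 4 * ((n : ℝ) / k) ≤ clusterSize cl a :=
    (mul_le_mul_of_nonneg_right hfactor (by positivity)).trans (hbal a).1
  linarith

end MeanMatrix

lemma div_sqrt_le_mul_sqrt {c m s : ℝ} (hc : 0 ≤ c) (hm : 0 ≤ m) (hms : m ≤ c ^ 2 * s) :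
    m / √s ≤ c * √m := by
  have hsqrt : √m ≤ c * √s := by
    simpa only [Real.sqrt_mul (sq_nonneg c), Real.sqrt_sq hc] using Real.sqrt_le_sqrt hms
  refine div_le_of_le_mul₀ (Real.sqrt_nonneg s) (by positivity) ?_
  calc m = √m * √m := (Real.mul_self_sqrt hm).symm
    _ ≤ c * √s * √m := mul_le_mul_of_nonneg_right hsqrt (Real.sqrt_nonneg m)
    _ = c * √m * √s := by ring

lemma Balanced.two_mul_div_sqrt_clusterSize_le {n k : ℕ} {cl : Fin n → Fin k}
    (hbal : Balanced n k cl) (hn : 3 ≤ n) {δ ε : ℝ} (hδ : 0 ≤ δ) (hε : ε ≤ 0.01 * δ * (n / k))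
    (a : Fin k) : 2 * ε / √(clusterSize cl a : ℝ) ≤ 0.04 * δ * √((n : ℝ) / k) := by
  calc 2 * ε / √(clusterSize cl a : ℝ)
      ≤ 2 * (0.01 * δ * (n / k)) / √(clusterSize cl a : ℝ) := by gcongr
    _ = 0.02 * δ * ((n : ℝ) / k / √(clusterSize cl a : ℝ)) := by ring
    _ ≤ 0.02 * δ * (2 * √((n : ℝ) / k)) := by
        gcongr
        refine div_sqrt_le_mul_sqrt zero_le_two (by positivity) ?_
        linarith [hbal.le_four_mul_clusterSize hn a]
    _ = 0.04 * δ * √((n : ℝ) / k) := by ring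

end SBM

open SBM in
theorem deviation_column_bound_general {n k : ℕ} {p q : ℝ} (hq : 0 ≤ q) (hqp : q ≤ p)
    {cl : Fin n → Fin k} {E : Matrix (Fin n) (Fin n) ℝ} {lam : Fin n → ℝ}
    {v : Fin n → Fin n → ℝ} (hdec : IsSpectralDecomp (meanMatrix n k p q cl + E) lam v)
    (u : Fin n) :
    SBM.enorm ((projTop k v - 1).mulVec (column (meanMatrix n k p q cl) u)) ≤
      2 * specNorm E / √(clusterSize cl (cl u) : ℝ) := by
  rw [column_meanMatrix_eq_mulVec_clusterAverage, div_eq_mul_inv,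
    ← enorm_clusterAverage (clusterSize_pos cl u)]
  exact enorm_projTop_sub_one_mulVec_mulVec_le (posSemidef_meanMatrix hq hqp cl)
    (rank_meanMatrix_le p q cl) hdec _

open SBM in
/-- If `n ≥ 3`, the partition is balanced, `E` is symmetric with
`‖E‖₂ ≤ 0.01·(p−q)·n/k` and `Ĝ = G + E`, then for every vertex `u`,
`‖(P_{Ĝ_k} − I)·G_u‖ ≤ 0.04·(p−q)·√(n/k)`. -/
theorem deviation_column_bound (n k : ℕ) (hn : 3 ≤ n) (hk : 0 < k)
    (p q : ℝ) (hq : 0 ≤ q) (hpq : q < p) (hp : p ≤ 1)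
    (cl : Fin n → Fin k) (hbal : Balanced n k cl)
    (E : Matrix (Fin n) (Fin n) ℝ) (hE : E.IsSymm)
    (hEnorm : specNorm E ≤ 0.01 * (p - q) * ((n : ℝ) / k))
    (lam : Fin n → ℝ) (v : Fin n → Fin n → ℝ)
    (hdec : IsSpectralDecomp (meanMatrix n k p q cl + E) lam v) :
    ∀ u : Fin n,
      SBM.enorm ((projTop k v - 1).mulVec (column (meanMatrix n k p q cl) u)) ≤
        0.04 * (p - q) * Real.sqrt ((n : ℝ) / k) := by
  exact fun u => (deviation_column_bound_general hq hpq.le hdec u).trans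
    (hbal.two_mul_div_sqrt_clusterSize_le hn (sub_nonneg.mpr hpq.le) hEnorm (cl u))
end
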